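/- arXiv:1909.08558 — 2 statements merged into one kernel-verified Lean document; each statement's English description precedes it below -/
import Mathlib

section
/- Let P₁, …, Pₙ > 0, ρ > 0, c₁ ∈ ℝⁿ with all entries nonnegative, and v ∈ ℝⁿ. The unique minimizer over the set {z ∈ ℝⁿ : z_l ≥ 0 for all l} of the function z ↦ Σ_{l=1}^n c₁ₗ z_l + (ρ/2) Σ_{l=1}^n P_l (v_l − z_l)² is the vector z* whose l-th entry is soft(max(v_l, 0), c₁ₗ/(ρ P_l)) = max(v_l − c₁ₗ/(ρ P_l), 0), where soft(x, κ) = 0 if |x| ≤ κ and soft(x, κ) = sign(x)(|x| − κ) otherwise. -/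
/-!
The objective separates over coordinates. With `κ = c / (ρ p)`, each coordinate is, up to an
additive constant, `(ρ p / 2) (z - (x - κ)) ^ 2`, so its minimizer over `z ≥ 0` is the projection
`s = max (x - κ) 0` of `x - κ` onto the half-line. The variational inequality
`(z - s) (s - (x - κ)) ≥ 0` gives quadratic growth with modulus `ρ p / 2` around `s`
(`coord_growth`); summing over coordinates yields both optimality and uniqueness.
-/

/-- Scalar soft-thresholding operator: soft(x, κ) = 0 if |x| ≤ κ,
    and sign(x)(|x| − κ) otherwise. -/
noncomputable def soft (x κ : ℝ) : ℝ :=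
  if |x| ≤ κ then 0 else Real.sign x * (|x| - κ)

/-- For `κ ≥ 0`, soft-thresholding the positive part of `x` is a shifted positive part. -/
lemma soft_max_zero (x κ : ℝ) (hκ : 0 ≤ κ) : soft (max x 0) κ = max (x - κ) 0 := by
  unfold soft
  rw [abs_of_nonneg (le_max_right x 0)]
  split_ifs with h
  · rw [max_eq_right (by linarith [le_max_left x 0])]
  · have hx : κ < x := by
      rcases lt_max_iff.1 (not_le.1 h) with h | h
      · exact h
      · linarith
    rw [max_eq_left (by linarith : (0 : ℝ) ≤ x), Real.sign_of_pos (by linarith),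
      max_eq_left (by linarith), one_mul]

/-- Quadratic growth of one coordinate of the objective around its constrained minimizer. -/
lemma coord_growth (p c x z ρ : ℝ) (hp : 0 < p) (hρ : 0 < ρ) (hz : 0 ≤ z) :
    (c * max (x - c / (ρ * p)) 0 + ρ / 2 * (p * (x - max (x - c / (ρ * p)) 0) ^ 2))
      + ρ / 2 * (p * (z - max (x - c / (ρ * p)) 0) ^ 2)
      ≤ c * z + ρ / 2 * (p * (x - z) ^ 2) := by
  have hρp : 0 < ρ * p := mul_pos hρ hp
  obtain ⟨κ, hκ⟩ : ∃ κ, κ = c / (ρ * p) := ⟨_, rfl⟩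
  have hc : c = κ * (ρ * p) := by rw [hκ]; field_simp
  rw [← hκ]
  -- The variational inequality characterizing the projection of `x - κ` onto `[0, ∞)`.
  have key : 0 ≤ (z - max (x - κ) 0) * (κ - x + max (x - κ) 0) := by
    rcases le_total (x - κ) 0 with h | h
    · rw [max_eq_right h]
      exact mul_nonneg (by linarith) (by linarith)
    · rw [max_eq_left h]
      apply le_of_eq
      ring
  have := mul_nonneg hρp.le key
  rw [hc]
  linarith

/-- For P_l > 0, ρ > 0, c₁ ⪰ 0, v ∈ ℝⁿ, the unique minimizer over
    {z : z ⪰ 0} of z ↦ Σ_l c₁ₗ z_l + (ρ/2) Σ_l P_l (v_l − z_l)² is the vector with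
    entries soft(max(v_l, 0), c₁ₗ/(ρ P_l)) = max(v_l − c₁ₗ/(ρ P_l), 0). -/
theorem stmt4 (n : ℕ) (P : Fin n → ℝ) (hP : ∀ l, 0 < P l) (ρ : ℝ) (hρ : 0 < ρ)
    (c₁ : Fin n → ℝ) (hc₁ : ∀ l, 0 ≤ c₁ l) (v : Fin n → ℝ) :
    let f : (Fin n → ℝ) → ℝ :=
      fun z => (∑ l, c₁ l * z l) + (ρ / 2) * ∑ l, P l * (v l - z l) ^ 2
    let zstar : Fin n → ℝ := fun l => soft (max (v l) 0) (c₁ l / (ρ * P l))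
    (∀ l, zstar l = max (v l - c₁ l / (ρ * P l)) 0) ∧
    (∀ l, 0 ≤ zstar l) ∧
    (∀ z : Fin n → ℝ, (∀ l, 0 ≤ z l) → f zstar ≤ f z) ∧
      ∀ z : Fin n → ℝ, (∀ l, 0 ≤ z l) →
        (∀ w : Fin n → ℝ, (∀ l, 0 ≤ w l) → f z ≤ f w) → z = zstar := by
  intro f zstar
  have hs : ∀ l, zstar l = max (v l - c₁ l / (ρ * P l)) 0 := fun l =>
    soft_max_zero _ _ (div_nonneg (hc₁ l) (mul_pos hρ (hP l)).le)
  have growth : ∀ z : Fin n → ℝ, (∀ l, 0 ≤ z l) →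
      f zstar + ∑ l, ρ / 2 * (P l * (z l - zstar l) ^ 2) ≤ f z := by
    intro z hz
    simp only [f, Finset.mul_sum, ← Finset.sum_add_distrib]
    refine Finset.sum_le_sum fun l _ => ?_
    rw [hs l]
    exact coord_growth _ _ _ _ _ (hP l) hρ (hz l)
  have hnn : ∀ (z : Fin n → ℝ), ∀ l ∈ Finset.univ,
      0 ≤ ρ / 2 * (P l * (z l - zstar l) ^ 2) := fun z l _ =>
    mul_nonneg (by linarith) (mul_nonneg (hP l).le (sq_nonneg _))
  have h0 : ∀ l, 0 ≤ zstar l := fun l => by rw [hs l]; exact le_max_right _ _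
  refine ⟨hs, h0, fun z hz => ?_, fun z hz hmin => ?_⟩
  · linarith [growth z hz, Finset.sum_nonneg (hnn z)]
  · have hsum : ∑ l, ρ / 2 * (P l * (z l - zstar l) ^ 2) = 0 :=
      le_antisymm (by linarith [growth z hz, hmin zstar h0]) (Finset.sum_nonneg (hnn z))
    funext l
    have hl := (Finset.sum_eq_zero_iff_of_nonneg (hnn z)).1 hsum l (Finset.mem_univ l)
    have hsq : (z l - zstar l) ^ 2 = 0 := by
      simpa [hρ.ne', (hP l).ne'] using hl
    exact sub_eq_zero.1 (pow_eq_zero_iff two_ne_zero |>.1 hsq)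
end

section
/- Let G be a real m×n matrix, F a real q×n matrix such that P = Fᵀ F is invertible, and suppose G P⁻¹ Gᵀ is invertible. For any h ∈ ℝᵐ and v ∈ ℝⁿ, the vector x* = (I − P⁻¹ Gᵀ (G P⁻¹ Gᵀ)⁻¹ G) v + P⁻¹ Gᵀ (G P⁻¹ Gᵀ)⁻¹ h is the unique minimizer of the function x ↦ ‖F (x − v)‖₂² over the affine set {x ∈ ℝⁿ : G x = h}. -/
open Matrix

/-!
The minimizer satisfies `xstar - v = P⁻¹ Gᵀ w` with `w = (G P⁻¹ Gᵀ)⁻¹ (h - G v)`, so that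
`P (xstar - v) = Gᵀ w`. For feasible `x`, the difference `x - xstar` lies in the kernel of `G`;
it is therefore orthogonal to `xstar - v` in the inner product of `P = Fᵀ F`, and Pythagoras gives
`‖F (x - v)‖² = ‖F (xstar - v)‖² + ‖F (x - xstar)‖²`. Minimality is immediate, and uniqueness
follows since `F` is injective when `Fᵀ F` is invertible.
-/

/-- With P = FᵀF invertible and G P⁻¹ Gᵀ invertible, the vector
    x* = (I − P⁻¹Gᵀ(GP⁻¹Gᵀ)⁻¹G) v + P⁻¹Gᵀ(GP⁻¹Gᵀ)⁻¹ h is the unique minimizer of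
    x ↦ ‖F(x − v)‖₂² over the affine set {x : G x = h}. -/
theorem stmt6 (m n q : ℕ) (G : Matrix (Fin m) (Fin n) ℝ) (F : Matrix (Fin q) (Fin n) ℝ)
    (P : Matrix (Fin n) (Fin n) ℝ) (hP : P = Fᵀ * F) (hPinv : IsUnit P.det)
    (hGP : IsUnit (G * P⁻¹ * Gᵀ).det) (h : Fin m → ℝ) (v : Fin n → ℝ) :
    let f : (Fin n → ℝ) → ℝ := fun x => ∑ i, (F.mulVec (x - v) i) ^ 2
    let xstar : Fin n → ℝ :=
      ((1 : Matrix (Fin n) (Fin n) ℝ) - P⁻¹ * Gᵀ * (G * P⁻¹ * Gᵀ)⁻¹ * G).mulVec v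
        + (P⁻¹ * Gᵀ * (G * P⁻¹ * Gᵀ)⁻¹).mulVec h
    G.mulVec xstar = h ∧
    (∀ x : Fin n → ℝ, G.mulVec x = h → f xstar ≤ f x) ∧
      ∀ x : Fin n → ℝ, G.mulVec x = h →
        (∀ y : Fin n → ℝ, G.mulVec y = h → f x ≤ f y) → x = xstar := by
  intro f xstar
  set S := G * P⁻¹ * Gᵀ with hS
  set w : Fin m → ℝ := S⁻¹ *ᵥ (h - G *ᵥ v) with hw
  have hx : xstar = v + (P⁻¹ * Gᵀ) *ᵥ w := by
    simp only [xstar, hw, ← hS, sub_mulVec, one_mulVec, mulVec_sub, mulVec_mulVec,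
      Matrix.mul_assoc (P⁻¹ * Gᵀ) S⁻¹ G]
    abel
  have hfeas : G *ᵥ xstar = h := by
    rw [hx, mulVec_add, mulVec_mulVec, ← Matrix.mul_assoc, ← hS, hw, mulVec_mulVec,
      Matrix.mul_nonsing_inv _ hGP, one_mulVec]
    abel
  -- Stationarity condition, with `w` as the Lagrange multiplier.
  have hstat : Fᵀ *ᵥ (F *ᵥ (xstar - v)) = Gᵀ *ᵥ w := by
    rw [mulVec_mulVec, ← hP, hx, add_sub_cancel_left, mulVec_mulVec, ← Matrix.mul_assoc,
      Matrix.mul_nonsing_inv _ hPinv, Matrix.one_mul]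
  have hpyth : ∀ x, G *ᵥ x = h → f x = f xstar + ∑ i, ((F *ᵥ (x - xstar)) i) ^ 2 := by
    intro x hGx
    have hcross : (F *ᵥ (x - xstar)) ⬝ᵥ (F *ᵥ (xstar - v)) = 0 := by
      have hker : G *ᵥ (x - xstar) = 0 := by rw [mulVec_sub, hGx, hfeas, sub_self]
      rw [← vecMul_transpose, ← dotProduct_mulVec, hstat, dotProduct_mulVec,
        vecMul_transpose, hker, zero_dotProduct]
    have hsplit : F *ᵥ (x - v) = F *ᵥ (xstar - v) + F *ᵥ (x - xstar) := by
      rw [← mulVec_add]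
      congr 1
      abel
    have hexp : f x = f xstar + ∑ i, ((F *ᵥ (x - xstar)) i) ^ 2
        + 2 * ((F *ᵥ (x - xstar)) ⬝ᵥ (F *ᵥ (xstar - v))) := by
      simp only [f, hsplit, dotProduct, Finset.mul_sum, ← Finset.sum_add_distrib, Pi.add_apply]
      exact Finset.sum_congr rfl fun i _ => by ring
    rw [hexp, hcross, mul_zero, add_zero]
  refine ⟨hfeas, fun x hGx => ?_, fun x hGx hmin => ?_⟩
  · rw [hpyth x hGx]
    exact le_add_of_nonneg_right (Finset.sum_nonneg fun i _ => sq_nonneg _)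
  · have hle : ∑ i, ((F *ᵥ (x - xstar)) i) ^ 2 ≤ 0 := by
      linarith [hmin xstar hfeas, hpyth x hGx]
    have hF : F *ᵥ (x - xstar) = 0 := by
      have hz := (Finset.sum_eq_zero_iff_of_nonneg fun i _ => sq_nonneg _).1
        (le_antisymm hle (Finset.sum_nonneg fun i _ => sq_nonneg _))
      funext i
      exact pow_eq_zero_iff two_ne_zero |>.1 (hz i (Finset.mem_univ i))
    have hPz : P *ᵥ (x - xstar) = 0 := by rw [hP, ← mulVec_mulVec, hF, mulVec_zero]
    have hz : x - xstar = 0 := by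
      rw [← one_mulVec (x - xstar), ← Matrix.nonsing_inv_mul _ hPinv, ← mulVec_mulVec, hPz,
        mulVec_zero]
    exact sub_eq_zero.1 hz
end
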